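/- For every positive integer m, the lower Minkowski dimension of C_m is at least 1/2; equivalently, limsup_{δ→0⁺} log λ(V_δ(C_m)) / log δ ≤ 1/2. -/

import Mathlib

open MeasureTheory Filter Set

/-- The closed `δ`-neighbourhood `V_δ(Ω) = {x : ∃ y ∈ Ω, |x - y| ≤ δ}`. -/
def closedNbhd (Ω : Set ℝ) (δ : ℝ) : Set ℝ := {x : ℝ | ∃ y ∈ Ω, |x - y| ≤ δ}

/-- The value `g(a₁ ⋯ a_k) = 1/(a₁ + 1/(a₂ + ⋯ + 1/a_k))` of a finite continued fraction. -/
noncomputable def cfVal : List ℕ → ℝ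
  | [] => 0
  | a :: t => 1 / ((a : ℝ) + cfVal t)

/-- A word of positive integers whose last letter (if any) is at least `2`. -/
def isCFWord (a : List ℕ) : Prop := (∀ x ∈ a, 1 ≤ x) ∧ ∀ ℓ ∈ a.getLast?, 2 ≤ ℓ

/-- `C_m`: the set of rationals in `(0,1)` whose continued fraction expansion
has length `m`. -/
def Cset (m : ℕ) : Set ℝ :=
  {x : ℝ | ∃ a : List ℕ, a.length = m ∧ isCFWord a ∧ x = cfVal a}

lemma cfVal_nonneg_aux (a : List ℕ) : 0 ≤ cfVal a := by
  induction a with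
  | nil => simp [cfVal]
  | cons x t ih => simp only [cfVal]; positivity

lemma cfVal_le_one_aux (a : List ℕ) (h : ∀ x ∈ a, 1 ≤ x) : cfVal a ≤ 1 := by
  cases a with
  | nil => simp [cfVal]
  | cons x t =>
    simp only [cfVal]
    have h1 : (1 : ℝ) ≤ x := by exact_mod_cast h x (by simp)
    have := cfVal_nonneg_aux t
    rw [div_le_one (by linarith)]
    linarith

lemma nbhd_upper_aux (m : ℕ) (δ : ℝ) : closedNbhd (Cset m) δ ⊆ Icc (-δ) (1 + δ) := by
  rintro x ⟨y, ⟨a, -, ha, rfl⟩, hy⟩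
  have h0 := cfVal_nonneg_aux a
  have h1 := cfVal_le_one_aux a ha.1
  rw [abs_le] at hy
  constructor <;> linarith [hy.1, hy.2]

lemma nbhd_lower_aux (m : ℕ) (hm : 0 < m) (s : ℝ) (hs : 0 < s) (hs2 : s ≤ 1 / 2) :
    Ioo 0 (s / 3) ⊆ closedNbhd (Cset m) (s ^ 2) := by
  rintro x ⟨hx0, hx⟩
  obtain ⟨k, rfl⟩ : ∃ k, m = k + 1 := ⟨m - 1, by omega⟩
  set t := List.replicate k 2 with ht
  have h0 := cfVal_nonneg_aux t
  have h1 : cfVal t ≤ 1 := cfVal_le_one_aux t (by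
    intro y hy; have := List.eq_of_mem_replicate hy; omega)
  set θ := cfVal t with hθ
  have hsi : 2 ≤ 1 / s := by rw [le_div_iff₀ hs]; linarith
  have hxi : 3 * (1 / s) ≤ 1 / x := by
    rw [le_div_iff₀ hx0, mul_one_div, div_mul_eq_mul_div, div_le_one hs]; linarith
  set n := ⌊1 / x - θ⌋₊ with hn
  have hn1 : (n : ℝ) ≤ 1 / x - θ := Nat.floor_le (by linarith)
  have hn2 : 1 / x - θ < n + 1 := Nat.lt_floor_add_one _
  have hns : 1 / s ≤ n := by linarith
  have hn2' : 2 ≤ n := by exact_mod_cast hsi.trans hns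
  have hall : ∀ y ∈ n :: t, 2 ≤ y := by
    intro y hy
    rcases List.mem_cons.1 hy with rfl | hy
    · exact hn2'
    · exact (List.eq_of_mem_replicate hy).ge
  refine ⟨cfVal (n :: t), ⟨n :: t, by simp [ht], ⟨fun y hy => (by norm_num : 1 ≤ 2).trans (hall y hy),
    fun y hy => hall y (List.mem_of_getLast? hy)⟩, rfl⟩, ?_⟩
  simp only [cfVal]
  rw [← hθ]
  set A : ℝ := n + θ with hA
  have hA0 : 1 / s ≤ A := by linarith
  have hApos : 0 < A := by linarith
  have hu : 1 / A ≤ s := by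
    rw [div_le_iff₀ hApos]; rw [div_le_iff₀ hs] at hA0; linarith
  have hxs : x ≤ s := by linarith
  have e : 1 / A - x = (1 / A) * x * (1 / x - A) := by field_simp
  have hb0 : 0 ≤ 1 / x - A := by linarith
  have hb1 : 1 / x - A ≤ 1 := by linarith
  have hA1 : 0 ≤ 1 / A := by positivity
  rw [abs_sub_comm, e, abs_of_nonneg (by positivity)]
  calc (1 / A) * x * (1 / x - A) ≤ s * s * 1 := by gcongr
    _ = s ^ 2 := by ring

lemma vol_lower_aux (m : ℕ) (hm : 0 < m) (δ : ℝ) (hδ : 0 < δ) (hδ2 : δ ≤ 1 / 4) :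
    √δ / 3 ≤ (volume (closedNbhd (Cset m) δ)).toReal := by
  have hs : 0 < √δ := Real.sqrt_pos.2 hδ
  have h := nbhd_lower_aux m hm (√δ) hs (by
    rw [Real.sqrt_le_left (by norm_num)]; linarith)
  rw [Real.sq_sqrt hδ.le] at h
  have hfin : volume (closedNbhd (Cset m) δ) ≠ ⊤ :=
    ne_top_of_le_ne_top (by simp) (measure_mono (nbhd_upper_aux m δ))
  have := ENNReal.toReal_mono hfin (measure_mono h)
  rwa [Real.volume_Ioo, ENNReal.toReal_ofReal (by linarith), sub_zero] at this

lemma vol_upper_aux (m : ℕ) (δ : ℝ) (hδ : 0 < δ) (hδ2 : δ ≤ 1 / 4) :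
    (volume (closedNbhd (Cset m) δ)).toReal ≤ 3 := by
  have := ENNReal.toReal_mono (by simp) (measure_mono (μ := volume) (nbhd_upper_aux m δ))
  rw [Real.volume_Icc, ENNReal.toReal_ofReal (by linarith)] at this
  linarith

/-- The lower Minkowski dimension of `C_m` is at least `1/2`:
`limsup_{δ → 0⁺} log λ(V_δ(C_m)) / log δ ≤ 1/2`. -/
theorem lower_minkowski_dim_Cm_ge (m : ℕ) (hm : 0 < m) :
    Filter.limsup
      (fun δ : ℝ => Real.log (volume (closedNbhd (Cset m) δ)).toReal / Real.log δ)
      (nhdsWithin (0 : ℝ) (Set.Ioi 0)) ≤ (1 / 2 : ℝ) := by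
  have hsmall : ∀ᶠ δ : ℝ in nhdsWithin (0 : ℝ) (Set.Ioi 0), 0 < δ ∧ δ ≤ 1 / 4 := by
    filter_upwards [Ioo_mem_nhdsGT (show (0 : ℝ) < 1 / 4 by norm_num)] with δ h
    exact ⟨h.1, h.2.le⟩
  have hlim0 : ∀ c : ℝ, Tendsto (fun δ : ℝ => c / Real.log δ)
      (nhdsWithin (0 : ℝ) (Set.Ioi 0)) (nhds 0) := fun c =>
    Real.tendsto_log_nhdsGT_zero.const_div_atBot c
  have hlim : Tendsto (fun δ : ℝ => 1 / 2 + (-Real.log 3) / Real.log δ)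
      (nhdsWithin (0 : ℝ) (Set.Ioi 0)) (nhds (1 / 2)) := by
    have := (hlim0 (-Real.log 3)).const_add (1 / 2 : ℝ)
    rwa [add_zero] at this
  have hle : (fun δ : ℝ => Real.log (volume (closedNbhd (Cset m) δ)).toReal / Real.log δ)
      ≤ᶠ[nhdsWithin (0 : ℝ) (Set.Ioi 0)] (fun δ : ℝ => 1 / 2 + (-Real.log 3) / Real.log δ) := by
    filter_upwards [hsmall] with δ ⟨h0, h1⟩
    have hlog : Real.log δ < 0 := Real.log_neg h0 (by linarith)
    have hs : 0 < √δ := Real.sqrt_pos.2 h0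
    have h := Real.log_le_log (by positivity) (vol_lower_aux m hm δ h0 h1)
    rw [Real.log_div hs.ne' (by norm_num), Real.log_sqrt h0.le] at h
    rw [div_le_iff_of_neg hlog, add_mul, div_mul_cancel₀ _ hlog.ne]
    linarith
  have hge : (fun δ : ℝ => Real.log 3 / Real.log δ) ≤ᶠ[nhdsWithin (0 : ℝ) (Set.Ioi 0)]
      (fun δ : ℝ => Real.log (volume (closedNbhd (Cset m) δ)).toReal / Real.log δ) := by
    filter_upwards [hsmall] with δ ⟨h0, h1⟩
    have hlog : Real.log δ < 0 := Real.log_neg h0 (by linarith)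
    have hs : 0 < √δ := Real.sqrt_pos.2 h0
    have h2 := vol_lower_aux m hm δ h0 h1
    have h := Real.log_le_log (by linarith [div_pos hs (show (0:ℝ) < 3 by norm_num)])
      (vol_upper_aux m δ h0 h1)
    exact div_le_div_of_nonpos_of_le hlog.le h
  have hcob : IsCoboundedUnder (· ≤ ·) (nhdsWithin (0 : ℝ) (Set.Ioi 0))
      (fun δ : ℝ => Real.log (volume (closedNbhd (Cset m) δ)).toReal / Real.log δ) :=
    ((hlim0 (Real.log 3)).isBoundedUnder_ge.mono_ge hge).isCoboundedUnder_le
  calc _ ≤ _ := limsup_le_limsup hle hcob hlim.isBoundedUnder_le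
    _ = 1 / 2 := hlim.limsup_eq
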